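/- For every real d ≥ 2 and K ≥ 1 there is a constant C = C(d, K) > 0 such that for all m, N ∈ ℕ with N ≥ 2 there exists an online factorization algorithm in the row arrival model (whose functions may depend on m, N, d, K) with the following guarantee: for every m×N matrix Q with entries in {0,1} whose shatter function satisfies π_Q(s) ≤ K·s^d for all integers 1 ≤ s ≤ N, when the algorithm is run on the rows q_1,…,q_m of Q it outputs matrices R_t and row vectors ℓ_t with ℓ_t·R_t = q_t, ‖R_t‖_{1→2} ≤ 1 for every t ∈ {1,…,m}, and max_{t∈{1,…,m}} ‖ℓ_t‖_2 ≤ C·min{ m^{(1−1/d)/2}·(log₂(4N))³ , N^{(1−1/d)/2}·(log₂(4N))^{1/d} }. -/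

import Mathlib

open Matrix

open Classical in
/-- The shatter function of a 0/1 matrix `Q`: `shatterFn Q s` is the maximum, over all
sets `S` of `s` columns, of the number of distinct rows of the submatrix `Q_S`. -/
noncomputable def shatterFn {m N : ℕ} (Q : Matrix (Fin m) (Fin N) ℝ) (s : ℕ) : ℕ :=
  Finset.sup (Finset.univ.filter fun S : Finset (Fin N) => S.card = s)
    (fun S => (Finset.image (fun i : Fin m => fun j : {x // x ∈ S} => Q i j)
      Finset.univ).card)

/-! For nonnegative column weights `w` of total mass `W`, a family of sets with shatter function
`O(s ^ d)` whose members are pairwise at weighted distance `≥ δ` has `O((W / δ) ^ d)` members: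
Haussler's packing lemma, from the edge count of one-inclusion graphs on a random sample of columns.

The algorithm keeps a hierarchical net of the rows seen so far, where the scale halves from one
level to the next and a new net point is attached to a close one of the previous level. The matrix
`R` consists of the rows `½ e_j` and of `σ (q - q')` for every net point `q` with parent `q'`, so a
row within squared distance `δ` of a net point at depth `k` costs at most `k / σ ^ 2 + 4 δ`. Column
norms stay bounded by multiplicative weights: distances are measured with column weights that are
multiplied by `1 + η` whenever a link changes the column. A link has small weight, so by the packing
lemma, which is uniform in `w`, the total weight never exceeds `2 N`; hence each column is met by at
most `2 log (2 N) / η` links. Stopping the net early gives the bound in terms of `N`, while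
replacing the packing bound by the trivial bound `m` gives the bound in terms of `m`.
-/

section

open Finset
open scoped symmDiff

section SetFamilies

variable {α : Type*}

/-- The subsets of `s` of positive weight. The size of the sets which they shatter controls the
weighted edge count of the one-inclusion graph on the subsets of `s`. -/
noncomputable def positiveSubsets (s : Finset α) (w : Finset α → ℝ) : Finset (Finset α) :=
  {u ∈ s.powerset | 0 < w u}

theorem mem_positiveSubsets {s u : Finset α} {w : Finset α → ℝ} :
    u ∈ positiveSubsets s w ↔ u ⊆ s ∧ 0 < w u := by
  simp [positiveSubsets]

variable [DecidableEq α]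

theorem subset_of_shatters_positiveSubsets {s t : Finset α} {w : Finset α → ℝ}
    (ht : (positiveSubsets s w).Shatters t) : t ⊆ s := by
  obtain ⟨u, hu, htu⟩ := ht.exists_superset
  exact htu.trans (mem_positiveSubsets.1 hu).1

theorem shatters_positiveSubsets_insert_of_max {s t : Finset α} {a : α} (ha : a ∉ s)
    {w : Finset α → ℝ}
    (ht : (positiveSubsets s fun u => max (w u) (w (insert a u))).Shatters t) :
    (positiveSubsets (insert a s) w).Shatters t := by
  have hat : a ∉ t := fun hat => ha (subset_of_shatters_positiveSubsets ht hat)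
  intro t' ht'
  obtain ⟨u, hu, rfl⟩ := ht ht'
  obtain ⟨hus, hwu⟩ := mem_positiveSubsets.1 hu
  rcases lt_max_iff.1 hwu with hwu | hwu
  · exact ⟨u, mem_positiveSubsets.2 ⟨hus.trans (subset_insert a s), hwu⟩, rfl⟩
  · exact ⟨insert a u, mem_positiveSubsets.2 ⟨insert_subset_insert a hus, hwu⟩,
      inter_insert_of_notMem hat⟩

theorem shatters_insert_positiveSubsets_insert_of_min {s t : Finset α} {a : α} (ha : a ∉ s)
    {w : Finset α → ℝ}
    (ht : (positiveSubsets s fun u => min (w u) (w (insert a u))).Shatters t) :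
    (positiveSubsets (insert a s) w).Shatters (insert a t) := by
  intro t' ht'
  obtain ⟨u, hu, htu⟩ := ht (subset_insert_iff.1 ht')
  obtain ⟨hus, hwu⟩ := mem_positiveSubsets.1 hu
  obtain ⟨hw₀, hw₁⟩ := lt_min_iff.1 hwu
  by_cases hat : a ∈ t'
  · exact ⟨insert a u, mem_positiveSubsets.2 ⟨insert_subset_insert a hus, hw₁⟩,
      by rw [← insert_inter_distrib, htu, insert_erase hat]⟩
  · exact ⟨u, mem_positiveSubsets.2 ⟨hus.trans (subset_insert a s), hw₀⟩,
      by rw [insert_inter_of_notMem fun h => ha (hus h), htu, erase_eq_of_notMem hat]⟩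

theorem sum_min_insert_powerset_insert_le {s : Finset α} {a i : α} (ha : a ∉ s) (hi : i ∈ s)
    (w : Finset α → ℝ) :
    ∑ u ∈ ((insert a s).erase i).powerset, min (w u) (w (insert i u)) ≤
      ∑ u ∈ (s.erase i).powerset,
          min (max (w u) (w (insert a u))) (max (w (insert i u)) (w (insert a (insert i u)))) +
        ∑ u ∈ (s.erase i).powerset,
          min (min (w u) (w (insert a u))) (min (w (insert i u)) (w (insert a (insert i u)))) := by
  have min_add_min_le (p q p' q' : ℝ) :
      min p q + min p' q' ≤ min (max p p') (max q q') + min (min p p') (min q q') := by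
    grind
  have hai : a ≠ i := fun h => ha (h ▸ hi)
  rw [erase_insert_of_ne hai, sum_powerset_insert fun h => ha (mem_of_mem_erase h),
    ← sum_add_distrib, ← sum_add_distrib]
  refine sum_le_sum fun u _ => ?_
  rw [Finset.insert_comm i a u]
  exact min_add_min_le _ _ _ _

theorem sum_min_insert_le_mul_sum (s : Finset α) {w : Finset α → ℝ} {D : ℝ} (hw : ∀ u, 0 ≤ w u)
    (hD : ∀ t, (positiveSubsets s w).Shatters t → (#t : ℝ) ≤ D) :
    ∑ i ∈ s, ∑ u ∈ (s.erase i).powerset, min (w u) (w (insert i u)) ≤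
      D * ∑ u ∈ s.powerset, w u := by
  induction s using Finset.induction_on generalizing w D with
  | empty =>
    rcases (hw ∅).eq_or_lt with h | h
    · simp [← h]
    · have hD₀ : 0 ≤ D := by
        simpa using hD ∅ (shatters_empty.2 ⟨∅, mem_positiveSubsets.2 ⟨Subset.rfl, h⟩⟩)
      simpa using mul_nonneg hD₀ h.le
  | insert a s ha ih =>
    -- Merging `u` with `insert a u` splits `w` into a `max` and a `min` part. If the `min` part
    -- shatters `t`, then `w` shatters `insert a t`, whence the bound `D - 1`.
    have ih_max := ih (w := fun u => max (w u) (w (insert a u)))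
      (fun u => le_max_of_le_left (hw u))
      fun t ht => hD t (shatters_positiveSubsets_insert_of_max ha ht)
    have ih_min := ih (w := fun u => min (w u) (w (insert a u))) (D := D - 1)
      (fun u => le_min (hw _) (hw _)) fun t ht => by
        have hcard := hD _ (shatters_insert_positiveSubsets_insert_of_min ha ht)
        rw [card_insert_of_notMem fun h => ha (subset_of_shatters_positiveSubsets ht h),
          Nat.cast_succ] at hcard
        linarith
    have total : ∑ u ∈ (insert a s).powerset, w u =
        ∑ u ∈ s.powerset, max (w u) (w (insert a u)) +
          ∑ u ∈ s.powerset, min (w u) (w (insert a u)) := by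
      rw [sum_powerset_insert ha, ← sum_add_distrib, ← sum_add_distrib]
      exact sum_congr rfl fun u _ => (max_add_min _ _).symm
    have edges := sum_le_sum fun i hi => sum_min_insert_powerset_insert_le ha hi w
    rw [sum_add_distrib] at edges
    rw [sum_insert ha, erase_insert ha, total]
    linarith

end SetFamilies

section WeightedDist

variable {X : Type*} [DecidableEq X]

/-- The distance between two sets `s` and `t` under the weighted counting measure `w`: the total
weight of the elements in which they differ. -/
noncomputable def weightedDist (w : X → ℝ) (s t : Finset X) : ℝ :=
  ∑ a ∈ s ∆ t, w a

theorem weightedDist_self (w : X → ℝ) (s : Finset X) : weightedDist w s s = 0 := by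
  simp [weightedDist]

theorem weightedDist_comm (w : X → ℝ) (s t : Finset X) :
    weightedDist w s t = weightedDist w t s := by
  rw [weightedDist, symmDiff_comm, weightedDist]

theorem weightedDist_mono {w w' : X → ℝ} (h : w ≤ w') (s t : Finset X) :
    weightedDist w s t ≤ weightedDist w' s t :=
  sum_le_sum fun a _ => h a

theorem weightedDist_le_sum [Fintype X] {w : X → ℝ} (hw : ∀ a, 0 ≤ w a) (s t : Finset X) :
    weightedDist w s t ≤ ∑ a, w a :=
  sum_le_univ_sum_of_nonneg hw

theorem sum_sum_weightedDist [Fintype X] (w : X → ℝ) (𝒞 : Finset (Finset X)) :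
    ∑ s ∈ 𝒞, ∑ t ∈ 𝒞, weightedDist w s t =
      ∑ a, w a * (2 * (#{s ∈ 𝒞 | a ∉ s} * #{s ∈ 𝒞 | a ∈ s})) := by
  have dist_eq (s t : Finset X) : weightedDist w s t =
      ∑ a, w a * ((if a ∉ s then 1 else 0) * (if a ∈ t then 1 else 0) +
        (if a ∈ s then 1 else 0) * (if a ∉ t then 1 else 0)) := by
    rw [weightedDist, ← sum_ite_mem_eq]
    refine sum_congr rfl fun a _ => ?_
    by_cases hs : a ∈ s <;> by_cases ht : a ∈ t <;> simp [mem_symmDiff, hs, ht]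
  simp_rw [dist_eq]
  rw [sum_congr rfl fun s _ => sum_comm, sum_comm]
  refine sum_congr rfl fun a _ => ?_
  simp_rw [← mul_sum, sum_add_distrib, ← sum_mul_sum, sum_boole]
  ring

theorem mul_card_sub_one_le_sum_min [Fintype X] {w : X → ℝ} (hw : ∀ a, 0 ≤ w a) {ρ : ℝ}
    {𝒞 : Finset (Finset X)} (h𝒞 : 𝒞.Nonempty)
    (hsep : (𝒞 : Set (Finset X)).Pairwise fun s t => ρ ≤ weightedDist w s t) :
    ρ * (#𝒞 - 1) ≤
      ∑ a, w a * (2 * min (#{s ∈ 𝒞 | a ∉ s} : ℝ) #{s ∈ 𝒞 | a ∈ s}) := by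
  have dist_sum_ge (s) (hs : s ∈ 𝒞) : ρ * (#𝒞 - 1) ≤ ∑ t ∈ 𝒞, weightedDist w s t := by
    have := card_nsmul_le_sum (𝒞.erase s) (weightedDist w s) ρ fun t ht =>
      hsep hs (mem_of_mem_erase ht) (ne_of_mem_erase ht).symm
    rw [nsmul_eq_mul, cast_card_erase_of_mem hs] at this
    rw [← add_sum_erase _ _ hs, weightedDist_self]
    linarith
  have mul_le (a : X) : (#{s ∈ 𝒞 | a ∉ s} * #{s ∈ 𝒞 | a ∈ s} : ℝ) ≤
      #𝒞 * min (#{s ∈ 𝒞 | a ∉ s} : ℝ) #{s ∈ 𝒞 | a ∈ s} := by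
    rw [← min_mul_max, mul_comm]
    gcongr
    exact max_le (mod_cast card_filter_le _ _) (mod_cast card_filter_le _ _)
  refine le_of_mul_le_mul_left ?_ (show (0 : ℝ) < #𝒞 from mod_cast h𝒞.card_pos)
  calc #𝒞 * (ρ * (#𝒞 - 1)) ≤ ∑ s ∈ 𝒞, ∑ t ∈ 𝒞, weightedDist w s t := by
        simpa using card_nsmul_le_sum 𝒞 _ _ dist_sum_ge
    _ = ∑ a, w a * (2 * (#{s ∈ 𝒞 | a ∉ s} * #{s ∈ 𝒞 | a ∈ s})) := sum_sum_weightedDist w 𝒞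
    _ ≤ ∑ a, w a * (2 * (#𝒞 * min (#{s ∈ 𝒞 | a ∉ s} : ℝ) #{s ∈ 𝒞 | a ∈ s})) := by
        refine sum_le_sum fun a _ => mul_le_mul_of_nonneg_left ?_ (hw a)
        exact mul_le_mul_of_nonneg_left (mul_le a) zero_le_two
    _ = #𝒞 * ∑ a, w a * (2 * min (#{s ∈ 𝒞 | a ∉ s} : ℝ) #{s ∈ 𝒞 | a ∈ s}) := by
        rw [mul_sum]
        exact sum_congr rfl fun a _ => by ring

end WeightedDist

section Packing

variable {X κ : Type*}

/-- Resampling one coordinate of an i.i.d. sample does not change its distribution. -/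
theorem sum_prod_mul_sum_update [Fintype X] [Fintype κ] [DecidableEq κ] {μ : X → ℝ}
    (hμ : ∑ a, μ a = 1) (F : (κ → X) → ℝ) (i : κ) :
    ∑ x : κ → X, (∏ j, μ (x j)) * ∑ a, μ a * F (Function.update x i a) =
      ∑ x : κ → X, (∏ j, μ (x j)) * F x := by
  let swap : (κ → X) × X → (κ → X) × X := fun p => (Function.update p.1 i p.2, p.1 i)
  have swap_swap : Function.Involutive swap := fun p => by simp [swap]
  have prod_update (x : κ → X) (a : X) :
      (∏ j, μ (Function.update x i a j)) * μ (x i) = (∏ j, μ (x j)) * μ a := by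
    rw [← mul_prod_erase univ _ (mem_univ i), ← mul_prod_erase univ (fun j => μ (x j)) (mem_univ i),
      prod_congr rfl fun j hj => by rw [Function.update_of_ne (ne_of_mem_erase hj)]]
    rw [Function.update_self]
    ring
  calc ∑ x : κ → X, (∏ j, μ (x j)) * ∑ a, μ a * F (Function.update x i a)
      = ∑ p : (κ → X) × X, (∏ j, μ ((swap p).1 j)) * μ (swap p).2 * F (swap p).1 := by
        simp_rw [swap, prod_update, Fintype.sum_prod_type, mul_sum, mul_assoc]
    _ = ∑ p : (κ → X) × X, (∏ j, μ (p.1 j)) * μ p.2 * F p.1 :=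
        Equiv.sum_comp swap_swap.toPerm fun p => (∏ j, μ (p.1 j)) * μ p.2 * F p.1
    _ = ∑ x : κ → X, (∏ j, μ (x j)) * F x := by
        simp_rw [Fintype.sum_prod_type, mul_right_comm _ _ (F _), ← mul_sum, hμ, mul_one]

variable [DecidableEq X] [Fintype κ]

/-- The trace of the set `s` on the sample `x`: the indices of the sample points lying in `s`. -/
def samplePattern (x : κ → X) (s : Finset X) : Finset κ := {i | x i ∈ s}

theorem mem_samplePattern {x : κ → X} {s : Finset X} {i : κ} :
    i ∈ samplePattern x s ↔ x i ∈ s := by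
  simp [samplePattern]

variable [DecidableEq κ]

theorem card_le_vcDim_of_shatters_image_samplePattern {𝒜 : Finset (Finset X)} {x : κ → X}
    {t : Finset κ} (ht : (𝒜.image (samplePattern x)).Shatters t) : #t ≤ 𝒜.vcDim := by
  have exists_mem (u) (hu : u ⊆ t) : ∃ s ∈ 𝒜, ∀ i ∈ t, x i ∈ s ↔ i ∈ u := by
    obtain ⟨v, hv, htv⟩ := ht hu
    obtain ⟨s, hs, rfl⟩ := mem_image.1 hv
    exact ⟨s, hs, fun i hi => by simp [← htv, hi, mem_samplePattern]⟩
  have injOn : Set.InjOn x t := fun i hi j hj hij => by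
    obtain ⟨s, -, hs⟩ := exists_mem {i} (singleton_subset_iff.2 hi)
    simpa [eq_comm] using (hs j hj).1 (hij ▸ (hs i hi).2 (mem_singleton_self i))
  rw [← card_image_of_injOn injOn]
  refine Shatters.card_le_vcDim fun v hv => ?_
  obtain ⟨s, hs, hsv⟩ := exists_mem {i ∈ t | x i ∈ v} (filter_subset _ _)
  refine ⟨s, hs, subset_antisymm (fun a ha => ?_) fun a ha => ?_⟩
  · obtain ⟨hat, has⟩ := mem_inter.1 ha
    obtain ⟨i, hi, rfl⟩ := mem_image.1 hat
    exact (mem_filter.1 ((hsv i hi).1 has)).2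
  · obtain ⟨i, hi, rfl⟩ := mem_image.1 (hv ha)
    exact mem_inter.2 ⟨hv ha, (hsv i hi).2 (mem_filter.2 ⟨hi, ha⟩)⟩

/-- The number of members of the family `𝒜` whose trace on the sample `x` is `u`. -/
def patternCount (𝒜 : Finset (Finset X)) (x : κ → X) (u : Finset κ) : ℕ :=
  #{s ∈ 𝒜 | samplePattern x s = u}

theorem sum_patternCount (𝒜 : Finset (Finset X)) (x : κ → X) :
    ∑ u, patternCount 𝒜 x u = #𝒜 :=
  (card_eq_sum_card_fiberwise fun s _ => mem_univ (samplePattern x s)).symm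

theorem positiveSubsets_patternCount (𝒜 : Finset (Finset X)) (x : κ → X) :
    positiveSubsets univ (fun u => (patternCount 𝒜 x u : ℝ)) = 𝒜.image (samplePattern x) := by
  ext u
  simp [mem_positiveSubsets, patternCount, card_pos, filter_nonempty_iff]

theorem patternCount_update (𝒜 : Finset (Finset X)) (x : κ → X) (a : X) {i : κ} {u : Finset κ}
    (hi : i ∉ u) :
    patternCount 𝒜 (Function.update x i a) u =
      #{s ∈ {s ∈ 𝒜 | (samplePattern x s).erase i = u} | a ∉ s} := by
  rw [patternCount, filter_filter]
  congr 1
  refine filter_congr fun s _ => ?_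
  simp only [Finset.ext_iff, mem_erase, mem_samplePattern, Function.update_apply]
  grind

theorem patternCount_update_insert (𝒜 : Finset (Finset X)) (x : κ → X) (a : X) {i : κ}
    {u : Finset κ} (hi : i ∉ u) :
    patternCount 𝒜 (Function.update x i a) (insert i u) =
      #{s ∈ {s ∈ 𝒜 | (samplePattern x s).erase i = u} | a ∈ s} := by
  rw [patternCount, filter_filter]
  congr 1
  refine filter_congr fun s _ => ?_
  simp only [Finset.ext_iff, mem_erase, mem_insert, mem_samplePattern, Function.update_apply]
  grind

theorem mul_card_sub_card_image_le_sum_update [Fintype X] {w : X → ℝ} (hw : ∀ a, 0 ≤ w a) {ρ : ℝ}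
    {𝒜 : Finset (Finset X)}
    (hsep : (𝒜 : Set (Finset X)).Pairwise fun s t => ρ ≤ weightedDist w s t)
    (x : κ → X) (i : κ) :
    ρ * (#𝒜 - #(𝒜.image fun s => (samplePattern x s).erase i)) ≤
      ∑ a, w a * (2 * ∑ u ∈ (univ.erase i).powerset,
        min (patternCount 𝒜 (Function.update x i a) u : ℝ)
          (patternCount 𝒜 (Function.update x i a) (insert i u))) := by
  set erased := fun s => (samplePattern x s).erase i
  have card_eq : (#𝒜 : ℝ) = ∑ u ∈ 𝒜.image erased, (#{s ∈ 𝒜 | erased s = u} : ℝ) :=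
    mod_cast card_eq_sum_card_image erased 𝒜
  have image_subset : 𝒜.image erased ⊆ (univ.erase i).powerset := by
    simp only [image_subset_iff, mem_powerset]
    exact fun s _ => erase_subset_erase i (subset_univ _)
  calc ρ * (#𝒜 - #(𝒜.image erased))
      = ∑ u ∈ 𝒜.image erased, ρ * (#{s ∈ 𝒜 | erased s = u} - 1) := by
        rw [← mul_sum, sum_sub_distrib, ← card_eq, sum_const, nsmul_one]
    _ ≤ ∑ u ∈ 𝒜.image erased, ∑ a, w a * (2 *
          min (#{s ∈ {s ∈ 𝒜 | erased s = u} | a ∉ s} : ℝ)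
            #{s ∈ {s ∈ 𝒜 | erased s = u} | a ∈ s}) := by
        refine sum_le_sum fun u hu => mul_card_sub_one_le_sum_min hw ?_ ?_
        · simpa [Finset.Nonempty] using hu
        · exact hsep.mono (coe_subset.2 (filter_subset _ _))
    _ ≤ ∑ u ∈ (univ.erase i).powerset, ∑ a, w a * (2 *
          min (#{s ∈ {s ∈ 𝒜 | erased s = u} | a ∉ s} : ℝ)
            #{s ∈ {s ∈ 𝒜 | erased s = u} | a ∈ s}) :=
        sum_le_sum_of_subset_of_nonneg image_subset fun u _ _ => sum_nonneg fun a _ =>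
          mul_nonneg (hw a) (by positivity)
    _ = _ := by
        rw [sum_comm]
        refine sum_congr rfl fun a _ => ?_
        simp_rw [mul_sum]
        refine sum_congr rfl fun u hu => ?_
        have hi : i ∉ u := fun h => notMem_erase i univ (mem_powerset.1 hu h)
        rw [patternCount_update 𝒜 x a hi, patternCount_update_insert 𝒜 x a hi]

theorem haussler_packing [Fintype X] {w : X → ℝ} (hw : ∀ a, 0 ≤ w a)
    (hw_sum : ∑ a, w a = 1) {ρ M : ℝ} (hρ : 0 ≤ ρ) {𝒜 : Finset (Finset X)}
    (hsep : (𝒜 : Set (Finset X)).Pairwise fun s t => ρ ≤ weightedDist w s t)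
    (hM : ∀ x : κ → X, (#(𝒜.image (samplePattern x)) : ℝ) ≤ M) :
    Fintype.card κ * (ρ * (#𝒜 - M)) ≤ 2 * (𝒜.vcDim * #𝒜) := by
  let prob (x : κ → X) : ℝ := ∏ j, w (x j)
  let edges (x : κ → X) (i : κ) : ℝ := ∑ u ∈ (univ.erase i).powerset,
    min (patternCount 𝒜 x u : ℝ) (patternCount 𝒜 x (insert i u))
  have prob_nonneg (x : κ → X) : 0 ≤ prob x := prod_nonneg fun j _ => hw _
  have sum_prob : ∑ x, prob x = 1 := by
    simpa [hw_sum] using (prod_univ_sum (fun _ : κ => (univ : Finset X)) fun _ => w).symm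
  have le_edges (x : κ → X) (i : κ) :
      ρ * (#𝒜 - M) ≤ ∑ a, w a * (2 * edges (Function.update x i a) i) := by
    refine (mul_le_mul_of_nonneg_left (sub_le_sub_left ?_ _) hρ).trans
      (mul_card_sub_card_image_le_sum_update hw hsep x i)
    have card_le := card_image_le (s := 𝒜.image (samplePattern x)) (f := fun u => u.erase i)
    rw [image_image] at card_le
    exact le_trans (mod_cast card_le) (hM x)
  have edges_le (x : κ → X) : ∑ i, edges x i ≤ 𝒜.vcDim * #𝒜 := by
    rw [← sum_patternCount 𝒜 x, Nat.cast_sum, ← powerset_univ]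
    refine sum_min_insert_le_mul_sum univ (fun u => Nat.cast_nonneg _) fun t ht => ?_
    rw [positiveSubsets_patternCount] at ht
    exact mod_cast card_le_vcDim_of_shatters_image_samplePattern ht
  calc Fintype.card κ * (ρ * (#𝒜 - M)) = ∑ _i : κ, ∑ x, prob x * (ρ * (#𝒜 - M)) := by
        rw [← sum_mul, sum_prob, one_mul, sum_const, nsmul_eq_mul, card_univ]
    _ ≤ ∑ i, ∑ x, prob x * ∑ a, w a * (2 * edges (Function.update x i a) i) :=
        sum_le_sum fun i _ => sum_le_sum fun x _ =>
          mul_le_mul_of_nonneg_left (le_edges x i) (prob_nonneg x)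
    _ = ∑ i, ∑ x, prob x * (2 * edges x i) :=
        sum_congr rfl fun i _ => sum_prod_mul_sum_update hw_sum (fun x => 2 * edges x i) i
    _ = 2 * ∑ x, prob x * ∑ i, edges x i := by
        rw [sum_comm, mul_sum]
        simp_rw [mul_sum, mul_left_comm]
    _ ≤ 2 * ∑ x, prob x * (𝒜.vcDim * #𝒜) := by
        gcongr with x
        · exact prob_nonneg x
        · exact edges_le x
    _ = 2 * (𝒜.vcDim * #𝒜) := by rw [← sum_mul, sum_prob, one_mul]

end Packing

section PolynomialGrowth

variable {X : Type*} [DecidableEq X] {𝒜 ℬ : Finset (Finset X)} {K d D : ℝ}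

/-- The set-family form of the bound `π(s) ≤ K * s ^ d` on the shatter function: every nonempty
set `S` is cut by the members of `𝒜` in at most `K * #S ^ d` ways. -/
def PolynomialGrowth (𝒜 : Finset (Finset X)) (K d : ℝ) : Prop :=
  ∀ S : Finset X, S.Nonempty → (#(𝒜.image (S ∩ ·)) : ℝ) ≤ K * (#S : ℝ) ^ d

theorem PolynomialGrowth.mono (h𝒜 : PolynomialGrowth 𝒜 K d) (hℬ : ℬ ⊆ 𝒜) :
    PolynomialGrowth ℬ K d := fun S hS =>
  le_trans (mod_cast card_le_card (image_subset_image hℬ)) (h𝒜 S hS)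

theorem PolynomialGrowth.card_image_samplePattern_le (h𝒜 : PolynomialGrowth 𝒜 K d) (hK : 0 ≤ K)
    (hd : 0 ≤ d) {κ : Type*} [Fintype κ] [Nonempty κ] [DecidableEq κ] (x : κ → X) :
    (#(𝒜.image (samplePattern x)) : ℝ) ≤ K * (Fintype.card κ : ℝ) ^ d := by
  set S := univ.image x
  have pattern_eq : samplePattern x = samplePattern x ∘ (S ∩ ·) := by
    ext s i
    simp [mem_samplePattern, S]
  rw [pattern_eq, ← image_image]
  calc (#((𝒜.image (S ∩ ·)).image (samplePattern x)) : ℝ) ≤ #(𝒜.image (S ∩ ·)) :=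
        mod_cast card_image_le
    _ ≤ K * (#S : ℝ) ^ d := h𝒜 S (univ_nonempty.image x)
    _ ≤ K * (Fintype.card κ : ℝ) ^ d := by
        gcongr
        exact card_image_le

theorem PolynomialGrowth.two_pow_card_le (h𝒜 : PolynomialGrowth 𝒜 K d) {S : Finset X}
    (hS : S.Nonempty) (hshatter : 𝒜.Shatters S) : (2 : ℝ) ^ #S ≤ K * (#S : ℝ) ^ d := by
  simpa [shatters_iff.1 hshatter] using h𝒜 S hS

theorem exists_forall_le_of_two_pow_le_mul_rpow (K d : ℝ) :
    ∃ D : ℝ, 1 ≤ D ∧ ∀ n : ℕ, (2 : ℝ) ^ n ≤ K * (n : ℝ) ^ d → n ≤ D := by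
  have isLittleO : (fun n : ℕ => K * (n : ℝ) ^ d) =o[Filter.atTop] fun n : ℕ => (2 : ℝ) ^ n := by
    have := (isLittleO_rpow_exp_pos_mul_atTop d (Real.log_pos one_lt_two)).comp_tendsto
      tendsto_natCast_atTop_atTop
    simpa [Function.comp_def, Real.exp_mul, Real.exp_log] using this.const_mul_left K
  have eventually_lt : ∀ᶠ n : ℕ in Filter.atTop, K * (n : ℝ) ^ d < 2 ^ n := by
    filter_upwards [isLittleO.bound one_half_pos] with n hn
    have hpow : (0 : ℝ) < 2 ^ n := by positivity
    rw [Real.norm_of_nonneg hpow.le] at hn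
    linarith [Real.le_norm_self (K * (n : ℝ) ^ d)]
  obtain ⟨D, hD⟩ := Filter.eventually_atTop.1 eventually_lt
  refine ⟨D + 1, by simp, fun n hn => ?_⟩
  have hnD : n ≤ D := le_of_not_ge fun h => (hD n h).not_ge hn
  exact_mod_cast hnD.trans D.le_succ

theorem PolynomialGrowth.vcDim_le (h𝒜 : PolynomialGrowth 𝒜 K d) (hD₀ : 0 ≤ D)
    (hD : ∀ n : ℕ, (2 : ℝ) ^ n ≤ K * (n : ℝ) ^ d → n ≤ D) : (𝒜.vcDim : ℝ) ≤ D := by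
  refine (Nat.le_floor_iff hD₀).1 (Finset.sup_le fun S hS => Nat.le_floor ?_)
  rcases S.eq_empty_or_nonempty with rfl | hne
  · simpa using hD₀
  · exact hD _ (h𝒜.two_pow_card_le hne (mem_shatterer.1 hS))

theorem PolynomialGrowth.card_le_of_separated [Fintype X] (h𝒜 : PolynomialGrowth 𝒜 K d)
    (hK : 0 ≤ K) (hd : 0 ≤ d) (hD₁ : 1 ≤ D)
    (hD : ∀ n : ℕ, (2 : ℝ) ^ n ≤ K * (n : ℝ) ^ d → n ≤ D) {w : X → ℝ} (hw : ∀ a, 0 ≤ w a)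
    {δ : ℝ} (hδ : 0 < δ) (hδw : δ ≤ ∑ a, w a)
    (hsep : (𝒜 : Set (Finset X)).Pairwise fun s t => δ ≤ weightedDist w s t) :
    (#𝒜 : ℝ) ≤ 2 * K * (5 * D) ^ d * ((∑ a, w a) / δ) ^ d := by
  set W := ∑ a, w a
  have hW : 0 < W := hδ.trans_le hδw
  have hratio : 1 ≤ W / δ := (one_le_div hδ).2 hδw
  set n := ⌈4 * D * (W / δ)⌉₊
  have n_ge : 4 * D ≤ n * (δ / W) := by
    rw [← div_le_iff₀ (by positivity), div_div_eq_mul_div, ← mul_div_assoc']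
    exact Nat.le_ceil _
  have n_le : (n : ℝ) ≤ 5 * D * (W / δ) := by
    have := (Nat.ceil_lt_add_one (show 0 ≤ 4 * D * (W / δ) by positivity)).le
    have := one_le_mul_of_one_le_of_one_le hD₁ hratio
    linarith
  have : Nonempty (Fin n) := ⟨⟨0, Nat.ceil_pos.2 (by positivity)⟩⟩
  have packing := haussler_packing (κ := Fin n) (w := fun a => w a / W) (ρ := δ / W)
    (fun a => div_nonneg (hw a) hW.le) (by rw [← sum_div, div_self hW.ne']) (by positivity)
    (fun s hs t ht hst => by
      simp only [weightedDist, ← sum_div]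
      exact div_le_div_of_nonneg_right (hsep hs ht hst) hW.le)
    fun x => h𝒜.card_image_samplePattern_le hK hd x
  rw [Fintype.card_fin, ← mul_assoc] at packing
  have vcDim_le := h𝒜.vcDim_le (zero_le_one.trans hD₁) hD
  have card_le : (#𝒜 : ℝ) ≤ 2 * (K * (n : ℝ) ^ d) := by
    by_contra! hlt
    have : 0 ≤ K * (n : ℝ) ^ d := by positivity
    nlinarith
  calc (#𝒜 : ℝ) ≤ 2 * (K * (n : ℝ) ^ d) := card_le
    _ ≤ 2 * (K * (5 * D * (W / δ)) ^ d) := by gcongr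
    _ = 2 * K * (5 * D) ^ d * (W / δ) ^ d := by
        rw [Real.mul_rpow (by positivity) (by positivity)]
        ring

end PolynomialGrowth

section RowSupport

variable {ι : Type*} [Fintype ι]

/-- The set of columns in which a row vector is nonzero. -/
noncomputable def rowSupport (q : ι → ℝ) : Finset ι :=
  {j | q j ≠ 0}

theorem indicator_rowSupport {q : ι → ℝ} (hq : ∀ j, q j = 0 ∨ q j = 1) :
    (rowSupport q : Set ι).indicator 1 = q := by
  ext j
  rcases hq j with hj | hj <;> simp [rowSupport, Set.indicator, hj]

theorem card_image_inter_rowSupport_le_shatterFn {m N : ℕ} (Q : Matrix (Fin m) (Fin N) ℝ)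
    (S : Finset (Fin N)) :
    #((univ.image fun i => rowSupport (Q i)).image (S ∩ ·)) ≤ shatterFn Q #S := by
  classical
  let restrict (i : Fin m) (j : {x // x ∈ S}) : ℝ := Q i j
  have inter_eq (i : Fin m) :
      S ∩ rowSupport (Q i) = (rowSupport (restrict i)).map (Function.Embedding.subtype _) := by
    ext j
    simp [rowSupport, restrict, and_comm]
  calc #((univ.image fun i => rowSupport (Q i)).image (S ∩ ·))
      = #((univ.image restrict).image fun q =>
          (rowSupport q).map (Function.Embedding.subtype _)) := by
        simp only [image_image, Function.comp_def, inter_eq]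
    _ ≤ #(univ.image restrict) := card_image_le
    _ ≤ shatterFn Q #S := by
        have hS : S ∈ ({S' | #S' = #S} : Finset (Finset (Fin N))) := by simp
        unfold shatterFn
        convert le_sup (f := fun S : Finset (Fin N) =>
          #(univ.image fun i (j : {x // x ∈ S}) => Q i j)) hS

theorem polynomialGrowth_image_rowSupport {m N : ℕ} {Q : Matrix (Fin m) (Fin N) ℝ} {K d : ℝ}
    (hQ : ∀ s : ℕ, 1 ≤ s → s ≤ N → (shatterFn Q s : ℝ) ≤ K * (s : ℝ) ^ d) :
    PolynomialGrowth (univ.image fun i => rowSupport (Q i)) K d := fun S hS =>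
  le_trans (mod_cast card_image_inter_rowSupport_le_shatterFn Q S)
    (hQ #S hS.card_pos (card_finset_fin_le S))

end RowSupport

section Representable

variable {ι : Type*} {R R' : List (ι → ℝ)} {v v' : ι → ℝ} {b b' : ℝ}

/-- The vector `v` is a linear combination of the rows `R` with coefficients of squared `ℓ²` norm
at most `b`. -/
def Representable (R : List (ι → ℝ)) (v : ι → ℝ) (b : ℝ) : Prop :=
  ∃ c : ℕ → ℝ, (∀ j, ∑ i ∈ range R.length, c i * R.getD i 0 j = v j) ∧
    ∑ i ∈ range R.length, c i ^ 2 ≤ b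

theorem Representable.mono (h : Representable R v b) (hb : b ≤ b') : Representable R v b' := by
  obtain ⟨c, hc, hcb⟩ := h
  exact ⟨c, hc, hcb.trans hb⟩

theorem Representable.zero : Representable R 0 0 := ⟨0, by simp, by simp⟩

theorem Representable.smul_singleton (c : ℝ) (r : ι → ℝ) : Representable [r] (c • r) (c ^ 2) :=
  ⟨fun _ => c, by simp, by simp⟩

theorem Representable.append (h : Representable R v b) (h' : Representable R' v' b') :
    Representable (R ++ R') (v + v') (b + b') := by
  obtain ⟨c, hc, hcb⟩ := h
  obtain ⟨c', hc', hcb'⟩ := h'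
  have sum_append (f : ℝ → (ι → ℝ) → ℝ) :
      ∑ i ∈ range (R ++ R').length,
          f (if i < R.length then c i else c' (i - R.length)) ((R ++ R').getD i 0) =
        ∑ i ∈ range R.length, f (c i) (R.getD i 0) +
          ∑ i ∈ range R'.length, f (c' i) (R'.getD i 0) := by
    rw [List.length_append, sum_range_add]
    congr 1
    · refine sum_congr rfl fun i hi => ?_
      rw [if_pos (mem_range.1 hi), List.getD_append _ _ _ _ (mem_range.1 hi)]
    · refine sum_congr rfl fun i _ => ?_
      rw [if_neg (by simp), List.getD_append_right _ _ _ _ (by simp), Nat.add_sub_cancel_left]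
  refine ⟨fun i => if i < R.length then c i else c' (i - R.length), fun j => ?_, ?_⟩
  · rw [sum_append fun x r => x * r j, hc j, hc' j, Pi.add_apply]
  · rw [sum_append fun x _ => x ^ 2]
    exact add_le_add hcb hcb'

theorem Representable.append_left (h : Representable R v b) (R' : List (ι → ℝ)) :
    Representable (R ++ R') v b := by
  simpa using h.append (Representable.zero (R := R'))

theorem Representable.map_smul (h : Representable R v b) {σ : ℝ} (hσ : σ ≠ 0) :
    Representable (R.map (σ • ·)) v (b / σ ^ 2) := by
  obtain ⟨c, hc, hcb⟩ := h
  refine ⟨fun i => c i / σ, fun j => ?_, ?_⟩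
  · rw [← hc j, List.length_map]
    refine sum_congr rfl fun i hi => ?_
    have hi : i < R.length := mem_range.1 hi
    rw [List.getD_eq_getElem _ _ (by simpa using hi), List.getElem_map,
      List.getD_eq_getElem _ _ hi, Pi.smul_apply, smul_eq_mul, ← mul_assoc,
      div_mul_cancel₀ _ hσ]
  · simp_rw [List.length_map, div_pow, ← sum_div]
    gcongr

theorem Representable.map_single [DecidableEq ι] (l : List ι) (v : ι → ℝ) :
    Representable (l.map fun a => Pi.single a (1 / 2)) (l.map fun a => Pi.single a (v a)).sum
      (l.map fun a => 4 * v a ^ 2).sum := by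
  induction l with
  | nil => exact Representable.zero
  | cons a l ih =>
    have head := Representable.smul_singleton (2 * v a) (Pi.single a (1 / 2 : ℝ) : ι → ℝ)
    rw [← Pi.single_smul, smul_eq_mul, mul_right_comm, mul_one_div_cancel two_ne_zero, one_mul,
      show (2 * v a) ^ 2 = 4 * v a ^ 2 by ring] at head
    simpa using head.append ih

end Representable

section Net

variable {ι : Type*}

/-- A node of the hierarchical net maintained by the algorithm. The field `parent` stores the point
of the parent node, and the level controls the distance of `point` to it. -/
structure NetNode (ι : Type*) where
  point : Finset ι
  parent : Finset ι
  level : ℕ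

/-- The root of the net, which represents the zero row. -/
def NetNode.root : NetNode ι := ⟨∅, ∅, 0⟩

/-- The difference between the `0/1` row of a node and that of its parent. -/
noncomputable def NetNode.link (n : NetNode ι) : ι → ℝ :=
  (n.point : Set ι).indicator 1 - (n.parent : Set ι).indicator 1

variable [DecidableEq ι]

theorem NetNode.link_apply_sq (n : NetNode ι) (j : ι) :
    n.link j ^ 2 = if j ∈ n.point ∆ n.parent then 1 else 0 := by
  by_cases h : j ∈ n.point <;> by_cases h' : j ∈ n.parent <;>
    simp [link, Set.indicator, mem_symmDiff, h, h']

/-- The multiplicative weight of the column `j`: every link in whose support `j` lies multiplies it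
by `1 + η`. -/
noncomputable def netWeight (η : ℝ) (T : List (NetNode ι)) (j : ι) : ℝ :=
  (1 + η) ^ T.countP fun n => j ∈ n.point ∆ n.parent

theorem netWeight_concat (η : ℝ) (T : List (NetNode ι)) (n : NetNode ι) (j : ι) :
    netWeight η (T ++ [n]) j =
      netWeight η T j + η * if j ∈ n.point ∆ n.parent then netWeight η T j else 0 := by
  rw [netWeight, List.countP_append, List.countP_singleton, pow_add, ← netWeight]
  split_ifs <;> grind

theorem one_le_netWeight {η : ℝ} (hη : 0 ≤ η) (T : List (NetNode ι)) (j : ι) :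
    1 ≤ netWeight η T j :=
  one_le_pow₀ (by linarith)

theorem netWeight_le_netWeight_concat {η : ℝ} (hη : 0 ≤ η) (T : List (NetNode ι))
    (n : NetNode ι) : netWeight η T ≤ netWeight η (T ++ [n]) := fun j => by
  have := zero_le_one.trans (one_le_netWeight hη T j)
  rw [netWeight_concat]
  exact le_add_of_nonneg_right (by positivity)

theorem sum_netWeight_concat [Fintype ι] (η : ℝ) (T : List (NetNode ι)) (n : NetNode ι) :
    ∑ j, netWeight η (T ++ [n]) j =
      ∑ j, netWeight η T j + η * weightedDist (netWeight η T) n.point n.parent := by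
  simp_rw [netWeight_concat, sum_add_distrib, ← mul_sum, sum_ite_mem_eq, weightedDist]

theorem mul_sum_link_sq_le_log_netWeight {η : ℝ} (hη₀ : 0 ≤ η) (hη₁ : η ≤ 1)
    (T : List (NetNode ι)) (j : ι) :
    η * (T.map fun n => n.link j ^ 2).sum ≤ 2 * Real.log (netWeight η T j) := by
  have sum_eq : (T.map fun n => n.link j ^ 2).sum =
      (T.countP (fun n => j ∈ n.point ∆ n.parent) : ℝ) := by
    simp_rw [NetNode.link_apply_sq]
    induction T with
    | nil => simp
    | cons n T ih => simp [List.countP_cons, ih, add_comm]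
  have half_le_log : η / 2 ≤ Real.log (1 + η) := by
    refine le_trans ?_ (Real.one_sub_inv_le_log_of_pos (by linarith))
    rw [← sub_nonneg]
    have : 1 - (1 + η)⁻¹ - η / 2 = η * (1 - η) / (2 * (1 + η)) := by
      field_simp
      ring
    rw [this]
    exact div_nonneg (mul_nonneg hη₀ (sub_nonneg.2 hη₁)) (by linarith)
  rw [sum_eq, netWeight, Real.log_pow]
  nlinarith [Nat.cast_nonneg (α := ℝ) (T.countP fun n => j ∈ n.point ∆ n.parent)]

/-- The resolution of the net at level `i`. At level `0` it is the total weight `2 * N` that the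
columns may reach. -/
noncomputable def netScale (N i : ℕ) : ℝ := 2 * N / 2 ^ i

theorem netScale_nonneg (N i : ℕ) : 0 ≤ netScale N i := by
  unfold netScale
  positivity

variable [Fintype ι]

/-- The node `n` may be appended to the net `T`: it lies within the resolution of the preceding
level from its parent, but is not yet resolved at its own level. -/
def IsNextNode (k : ℕ) (η : ℝ) (T : List (NetNode ι)) (n : NetNode ι) : Prop :=
  ∃ i < k, n.level = i + 1 ∧
    (∃ p ∈ T, p.level ≤ i ∧ p.point = n.parent ∧
      weightedDist (netWeight η T) n.point p.point ≤ netScale (Fintype.card ι) i) ∧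
    ∀ p ∈ T, p.level ≤ i + 1 →
      netScale (Fintype.card ι) (i + 1) < weightedDist (netWeight η T) p.point n.point

open Classical in
/-- The update of the net of depth `k` on the arrival of the point `s`. -/
noncomputable def netStep (k : ℕ) (η : ℝ) (T : List (NetNode ι)) (s : Finset ι) :
    List (NetNode ι) :=
  if h : ∃ n : NetNode ι, n.point = s ∧ IsNextNode k η T n then T ++ [h.choose] else T

/-- The net of depth `k` after the arrival of the points `l`. -/
noncomputable def netRun (k : ℕ) (η : ℝ) (l : List (Finset ι)) : List (NetNode ι) :=
  l.foldl (netStep k η) [NetNode.root]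

theorem netRun_concat (k : ℕ) (η : ℝ) (l : List (Finset ι)) (s : Finset ι) :
    netRun k η (l ++ [s]) = netStep k η (netRun k η l) s := by
  simp [netRun]

/-- Under every weighting of the columns that the algorithm may reach, at most `M i` members of `𝒜`
are pairwise separated at the resolution of level `i + 1`. -/
def PackingBound (𝒜 : Finset (Finset ι)) (k : ℕ) (M : ℕ → ℝ) : Prop :=
  ∀ i < k, ∀ w : ι → ℝ, (∀ j, 1 ≤ w j) → ∑ j, w j ≤ 2 * Fintype.card ι → ∀ ℬ ⊆ 𝒜,
    ((ℬ : Set (Finset ι)).Pairwise fun s t =>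
      netScale (Fintype.card ι) (i + 1) ≤ weightedDist w s t) → (#ℬ : ℝ) ≤ M i

/-- The points of `T` on a common level are separated by more than the resolution of that level. -/
def NetSeparated (w : ι → ℝ) (T : List (NetNode ι)) : Prop :=
  T.Pairwise fun p n => p.level = n.level →
    netScale (Fintype.card ι) n.level < weightedDist w p.point n.point

/-- The properties of the net that every arrival preserves. -/
structure NetInvariant (𝒜 : Finset (Finset ι)) (k : ℕ) (η : ℝ) (M : ℕ → ℝ)
    (T : List (NetNode ι)) : Prop where
  root_mem : NetNode.root ∈ T
  level_le : ∀ n ∈ T, n.level ≤ k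
  point_mem : ∀ n ∈ T, n.level ≠ 0 → n.point ∈ 𝒜
  representable : ∀ n ∈ T,
    Representable (T.map NetNode.link) ((n.point : Set ι).indicator 1) n.level
  separated : NetSeparated (netWeight η T) T
  countP_level_le : ∀ i < k, (T.countP fun n => n.level = i + 1 : ℝ) ≤ M i
  sum_weight_le : ∑ j, netWeight η T j ≤ Fintype.card ι +
    η * ∑ i ∈ range k, (T.countP fun n => n.level = i + 1) * netScale (Fintype.card ι) i

variable {𝒜 : Finset (Finset ι)} {k : ℕ} {η : ℝ} {M : ℕ → ℝ} {T : List (NetNode ι)}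
  {n : NetNode ι}

theorem NetInvariant.sum_weight_le_two_mul (hT : NetInvariant 𝒜 k η M T) (hη : 0 ≤ η)
    (hM : η * ∑ i ∈ range k, M i * netScale (Fintype.card ι) i ≤ Fintype.card ι) :
    ∑ j, netWeight η T j ≤ 2 * Fintype.card ι := by
  have : η * ∑ i ∈ range k, (T.countP fun n => n.level = i + 1) * netScale (Fintype.card ι) i ≤
      η * ∑ i ∈ range k, M i * netScale (Fintype.card ι) i := by
    gcongr with i hi
    · exact netScale_nonneg _ _
    · exact hT.countP_level_le i (mem_range.1 hi)
  linarith [hT.sum_weight_le]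

theorem PackingBound.nonneg (hpack : PackingBound 𝒜 k M) {i : ℕ} (hi : i < k) : 0 ≤ M i := by
  simpa using hpack i hi 1 (fun _ => le_rfl) (by simp [two_mul]) ∅ (empty_subset _) (by simp)

theorem netInvariant_root (hpack : PackingBound 𝒜 k M) : NetInvariant 𝒜 k η M [NetNode.root] where
  root_mem := List.mem_singleton_self _
  level_le := by simp [NetNode.root]
  point_mem := by simp [NetNode.root]
  representable := by
    simpa [NetNode.root] using! Representable.zero
  separated := List.pairwise_singleton _ _
  countP_level_le := by simpa [NetNode.root] using fun i hi => hpack.nonneg hi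
  sum_weight_le := by simp [NetNode.root, netWeight]

theorem NetSeparated.mono {w w' : ι → ℝ} (h : NetSeparated w T) (hw : w ≤ w') :
    NetSeparated w' T :=
  List.Pairwise.imp (fun hpn hlevel => (hpn hlevel).trans_le (weightedDist_mono hw _ _)) h

theorem NetSeparated.countP_level_le {w : ι → ℝ} (h : NetSeparated w T)
    (hpack : PackingBound 𝒜 k M) (hw : ∀ j, 1 ≤ w j) (hw_sum : ∑ j, w j ≤ 2 * Fintype.card ι)
    (hpoint : ∀ n ∈ T, n.level ≠ 0 → n.point ∈ 𝒜) {i : ℕ} (hi : i < k) :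
    (T.countP fun n => n.level = i + 1 : ℝ) ≤ M i := by
  set points := (T.filter fun n => n.level = i + 1).map NetNode.point
  have far : points.Pairwise fun s t => netScale (Fintype.card ι) (i + 1) < weightedDist w s t := by
    refine List.pairwise_map.2 (List.pairwise_filter.2 (h.imp fun {p n} hpn hp hn => ?_))
    rw [← of_decide_eq_true hn]
    exact hpn ((of_decide_eq_true hp).trans (of_decide_eq_true hn).symm)
  have nodup : points.Nodup := far.imp fun {s t} hst hst' => by
    rw [hst', weightedDist_self] at hst
    exact hst.not_ge (netScale_nonneg _ _)
  have card_eq : #points.toFinset = T.countP fun n => n.level = i + 1 := by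
    rw [List.toFinset_card_of_nodup nodup, List.length_map, List.countP_eq_length_filter]
  rw [← card_eq]
  refine hpack i hi w hw hw_sum _ (fun s hs => ?_) ?_
  · obtain ⟨n, hn, rfl⟩ := List.mem_map.1 (List.mem_toFinset.1 hs)
    obtain ⟨hnT, hlevel⟩ := List.mem_filter.1 hn
    exact hpoint n hnT (of_decide_eq_true hlevel ▸ i.succ_ne_zero)
  · have : Std.Symm fun s t => netScale (Fintype.card ι) (i + 1) ≤ weightedDist w s t :=
      ⟨fun s t h => by rwa [weightedDist_comm]⟩
    rw [List.coe_toFinset]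
    exact (far.imp le_of_lt).set_pairwise

theorem NetSeparated.concat (h : NetSeparated (netWeight η T) T) (hn : IsNextNode k η T n) :
    NetSeparated (netWeight η T) (T ++ [n]) := by
  obtain ⟨i, -, hlevel, -, far⟩ := hn
  refine List.pairwise_append.2 ⟨h, List.pairwise_singleton _ _, fun p hp n' hn' hpn => ?_⟩
  obtain rfl := List.mem_singleton.1 hn'
  rw [hlevel] at hpn ⊢
  exact far p hp hpn.le

theorem Representable.concat_link
    (hT : ∀ p ∈ T, Representable (T.map NetNode.link) ((p.point : Set ι).indicator 1) p.level)
    (hn : IsNextNode k η T n) :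
    Representable ((T ++ [n]).map NetNode.link) ((n.point : Set ι).indicator 1) n.level := by
  obtain ⟨i, -, hlevel, ⟨p, hp, hpi, hparent, -⟩, -⟩ := hn
  have := (hT p hp).append (Representable.smul_singleton 1 n.link)
  rw [one_smul, NetNode.link, ← hparent, add_sub_cancel] at this
  rw [List.map_append, List.map_singleton, NetNode.link, ← hparent, hlevel]
  refine this.mono ?_
  push_cast
  gcongr
  norm_num

theorem NetInvariant.sum_netWeight_concat_le (hT : NetInvariant 𝒜 k η M T) (hη : 0 ≤ η)
    (hn : IsNextNode k η T n) :
    ∑ j, netWeight η (T ++ [n]) j ≤ Fintype.card ι + η * ∑ i ∈ range k,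
      ((T ++ [n]).countP fun n => n.level = i + 1) * netScale (Fintype.card ι) i := by
  obtain ⟨i, hik, hlevel, ⟨p, -, -, hparent, near⟩, -⟩ := hn
  have count_sum : ∑ i' ∈ range k,
      ((T ++ [n]).countP fun n => n.level = i' + 1) * netScale (Fintype.card ι) i' =
      ∑ i' ∈ range k, (T.countP fun n => n.level = i' + 1) * netScale (Fintype.card ι) i' +
        netScale (Fintype.card ι) i := by
    simp [List.countP_append, List.countP_singleton, hlevel, add_mul, sum_add_distrib, hik]
  rw [hparent] at near
  rw [sum_netWeight_concat, count_sum]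
  linarith [hT.sum_weight_le, mul_le_mul_of_nonneg_left near hη]

theorem NetInvariant.concat (hT : NetInvariant 𝒜 k η M T) (hη : 0 ≤ η)
    (hpack : PackingBound 𝒜 k M)
    (hM : η * ∑ i ∈ range k, M i * netScale (Fintype.card ι) i ≤ Fintype.card ι)
    (hn : IsNextNode k η T n) (hn𝒜 : n.point ∈ 𝒜) : NetInvariant 𝒜 k η M (T ++ [n]) := by
  have forall_mem_concat {P : NetNode ι → Prop} (hP : ∀ p ∈ T, P p) (hPn : P n) :
      ∀ p ∈ T ++ [n], P p := by
    simpa [or_imp, forall_and] using ⟨hP, hPn⟩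
  have point_mem := forall_mem_concat hT.point_mem fun _ => hn𝒜
  have separated := hT.separated.concat hn
  exact {
    root_mem := List.mem_append_left _ hT.root_mem
    level_le := forall_mem_concat hT.level_le <| by
      obtain ⟨i, hik, hlevel, -⟩ := hn
      exact hlevel ▸ hik
    point_mem := point_mem
    representable := forall_mem_concat
      (fun p hp => by simpa using (hT.representable p hp).append_left [n.link])
      (Representable.concat_link hT.representable hn)
    separated := separated.mono (netWeight_le_netWeight_concat hη T n)
    countP_level_le := fun i hi => separated.countP_level_le hpack (one_le_netWeight hη T)
      (hT.sum_weight_le_two_mul hη hM) point_mem hi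
    sum_weight_le := hT.sum_netWeight_concat_le hη hn }

theorem NetInvariant.step (hT : NetInvariant 𝒜 k η M T) (hη : 0 ≤ η)
    (hpack : PackingBound 𝒜 k M)
    (hM : η * ∑ i ∈ range k, M i * netScale (Fintype.card ι) i ≤ Fintype.card ι)
    {s : Finset ι} (hs : s ∈ 𝒜) : NetInvariant 𝒜 k η M (netStep k η T s) := by
  rw [netStep]
  split_ifs with h
  · exact hT.concat hη hpack hM h.choose_spec.2 (by rwa [h.choose_spec.1])
  · exact hT

theorem netInvariant_netRun (hη : 0 ≤ η) (hpack : PackingBound 𝒜 k M)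
    (hM : η * ∑ i ∈ range k, M i * netScale (Fintype.card ι) i ≤ Fintype.card ι)
    {l : List (Finset ι)} (hl : ∀ s ∈ l, s ∈ 𝒜) : NetInvariant 𝒜 k η M (netRun k η l) := by
  induction l using List.reverseRecOn with
  | nil => exact netInvariant_root hpack
  | append_singleton l s ih =>
    simp only [List.forall_mem_append, List.forall_mem_singleton] at hl
    rw [netRun_concat]
    exact (ih hl.1).step hη hpack hM hl.2

theorem exists_weightedDist_le_netScale (hroot : NetNode.root ∈ T)
    (hsum : ∑ j, netWeight η T j ≤ 2 * Fintype.card ι) (hη : 0 ≤ η) {s : Finset ι}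
    (hs : ¬∃ n : NetNode ι, n.point = s ∧ IsNextNode k η T n) {i : ℕ} (hi : i ≤ k) :
    ∃ p ∈ T, p.level ≤ i ∧
      weightedDist (netWeight η T) s p.point ≤ netScale (Fintype.card ι) i := by
  induction i with
  | zero =>
    refine ⟨NetNode.root, hroot, le_rfl, (weightedDist_le_sum (fun j => ?_) _ _).trans ?_⟩
    · exact zero_le_one.trans (one_le_netWeight hη T j)
    · simpa [netScale] using hsum
  | succ i ih =>
    obtain ⟨p, hp, hpi, near⟩ := ih (Nat.le_of_succ_le hi)
    by_contra! far
    refine hs ⟨⟨s, p.point, i + 1⟩, rfl, i, hi, rfl, ⟨p, hp, hpi, rfl, near⟩, fun q hq hqi => ?_⟩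
    rw [weightedDist_comm]
    exact far q hq hqi

theorem NetInvariant.exists_weightedDist_netStep_le (hT : NetInvariant 𝒜 k η M T) (hη : 0 ≤ η)
    (hM : η * ∑ i ∈ range k, M i * netScale (Fintype.card ι) i ≤ Fintype.card ι)
    (s : Finset ι) :
    ∃ p ∈ netStep k η T s,
      weightedDist (fun _ => 1) s p.point ≤ netScale (Fintype.card ι) k := by
  rw [netStep]
  split_ifs with h
  · refine ⟨h.choose, by simp, ?_⟩
    rw [h.choose_spec.1, weightedDist_self]
    exact netScale_nonneg _ _
  · obtain ⟨p, hp, -, near⟩ := exists_weightedDist_le_netScale hT.root_mem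
      (hT.sum_weight_le_two_mul hη hM) hη h le_rfl
    exact ⟨p, hp, (weightedDist_mono (one_le_netWeight hη T) _ _).trans near⟩

theorem PolynomialGrowth.packingBound [Nonempty ι] {K d D : ℝ} (h𝒜 : PolynomialGrowth 𝒜 K d)
    (hK : 0 ≤ K) (hd : 0 ≤ d) (hD₁ : 1 ≤ D)
    (hD : ∀ n : ℕ, (2 : ℝ) ^ n ≤ K * (n : ℝ) ^ d → n ≤ D) {m : ℝ} (hm : #𝒜 ≤ m) (k : ℕ) :
    PackingBound 𝒜 k fun i => min (2 * K * (5 * D) ^ d * ((2 : ℝ) ^ d) ^ (i + 1)) m := by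
  intro i _ w hw hw_sum ℬ hℬ hsep
  have card_pos : (0 : ℝ) < Fintype.card ι := mod_cast Fintype.card_pos
  have scale_pos : 0 < netScale (Fintype.card ι) (i + 1) := by
    unfold netScale
    positivity
  have scale_le : netScale (Fintype.card ι) (i + 1) ≤ ∑ j, w j :=
    calc netScale (Fintype.card ι) (i + 1) ≤ Fintype.card ι := by
          rw [netScale, pow_succ, mul_comm, mul_div_mul_right _ _ two_ne_zero]
          exact div_le_self card_pos.le (one_le_pow₀ one_le_two)
      _ = ∑ _j : ι, (1 : ℝ) := by simp
      _ ≤ ∑ j, w j := sum_le_sum fun j _ => hw j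
  have ratio_le : (∑ j, w j) / netScale (Fintype.card ι) (i + 1) ≤ 2 ^ (i + 1) := by
    rw [div_le_iff₀ scale_pos, netScale, mul_div_cancel₀ _ (by positivity)]
    exact hw_sum
  refine le_min ?_ (le_trans (mod_cast card_le_card hℬ) hm)
  calc (#ℬ : ℝ) ≤ 2 * K * (5 * D) ^ d * ((∑ j, w j) / netScale (Fintype.card ι) (i + 1)) ^ d :=
        (h𝒜.mono hℬ).card_le_of_separated hK hd hD₁ hD
          (fun j => zero_le_one.trans (hw j)) scale_pos scale_le hsep
    _ ≤ 2 * K * (5 * D) ^ d * ((2 : ℝ) ^ (i + 1)) ^ d := by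
        gcongr
        exact div_nonneg (scale_pos.le.trans scale_le) scale_pos.le
    _ = 2 * K * (5 * D) ^ d * ((2 : ℝ) ^ d) ^ (i + 1) := by
        rw [Real.rpow_pow_comm zero_le_two]

end Net

section Rows

variable {ι : Type*} [Fintype ι] [DecidableEq ι] {T : List (NetNode ι)} {σ η : ℝ}

/-- The rows of the right factor: half of the standard basis, followed by the links of the net
scaled by `σ`. -/
noncomputable def factorRows (σ : ℝ) (T : List (NetNode ι)) : List (ι → ℝ) :=
  univ.toList.map (fun a => Pi.single a (1 / 2)) ++ T.map fun n => σ • n.link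

theorem sum_sq_indicator_sub_indicator (s t : Finset ι) :
    ∑ j, ((s : Set ι).indicator 1 j - (t : Set ι).indicator 1 j : ℝ) ^ 2 =
      weightedDist (fun _ => 1) s t := by
  calc ∑ j, ((s : Set ι).indicator 1 j - (t : Set ι).indicator 1 j : ℝ) ^ 2
      = ∑ j, if j ∈ s ∆ t then 1 else 0 :=
        sum_congr rfl fun j _ => NetNode.link_apply_sq ⟨s, t, 0⟩ j
    _ = weightedDist (fun _ => 1) s t := sum_ite_mem_eq _ _

theorem representable_factorRows {v : ι → ℝ} {b : ℝ} (hσ : σ ≠ 0)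
    (hv : Representable (T.map NetNode.link) v b) (u : ι → ℝ) :
    Representable (factorRows σ T) u (b / σ ^ 2 + 4 * ∑ j, (u j - v j) ^ 2) := by
  have basis := Representable.map_single (univ.toList (α := ι)) (u - v)
  rw [sum_map_toList, univ_sum_single, sum_map_toList, ← mul_sum] at basis
  simpa [factorRows, Function.comp_def, add_comm] using basis.append (hv.map_smul hσ)

theorem sum_range_getD {α : Type*} (l : List α) (a : α) (f : α → ℝ) :
    ∑ i ∈ range l.length, f (l.getD i a) = (l.map f).sum := by
  rw [← Fin.sum_univ_fun_getElem, ← Fin.sum_univ_eq_sum_range fun i => f (l.getD i a)]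
  exact sum_congr rfl fun i _ => by rw [List.getD_eq_getElem _ _ i.2]

theorem sum_factorRows_sq_le_one (hη₀ : 0 < η) (hη₁ : η ≤ 1) {W : ℝ}
    (hσ : 4 * σ ^ 2 * Real.log W ≤ η) {j : ι} (hW : netWeight η T j ≤ W) :
    ∑ i ∈ range (factorRows σ T).length, (factorRows σ T).getD i 0 j ^ 2 ≤ 1 := by
  set load := (T.map fun n => n.link j ^ 2).sum
  have sum_eq : ∑ i ∈ range (factorRows σ T).length, (factorRows σ T).getD i 0 j ^ 2 =
      1 / 4 + σ ^ 2 * load := by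
    rw [sum_range_getD (factorRows σ T) 0 fun r => r j ^ 2, factorRows, List.map_append,
      List.sum_append, List.map_map, List.map_map, sum_map_toList]
    congr 1
    · norm_num [Pi.single_apply, ite_pow]
    · simp [load, Function.comp_def, mul_pow, List.sum_map_mul_left]
  have load_le : η * load ≤ 2 * Real.log W := by
    refine (mul_sum_link_sq_le_log_netWeight hη₀.le hη₁ T j).trans ?_
    gcongr
    exact zero_lt_one.trans_le (one_le_netWeight hη₀.le T j)
  have : σ ^ 2 * load ≤ 1 / 2 := by
    refine le_of_mul_le_mul_left ?_ hη₀
    nlinarith [mul_le_mul_of_nonneg_left load_le (sq_nonneg σ)]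
  linarith

end Rows

section Online

variable {ι : Type*} [Fintype ι] [DecidableEq ι] {𝒜 : Finset (Finset ι)} {k : ℕ} {σ η : ℝ}
  {M : ℕ → ℝ}

/-- The right factor after the arrival of the rows `l`. -/
noncomputable def onlineRows (k : ℕ) (η σ : ℝ) (l : List (ι → ℝ)) : List (ι → ℝ) :=
  factorRows σ (netRun k η (l.map rowSupport))

theorem onlineRows_prefix_concat (k : ℕ) (η σ : ℝ) (l : List (ι → ℝ)) (q : ι → ℝ) :
    onlineRows k η σ l <+: onlineRows k η σ (l ++ [q]) := by
  have netStep_prefix (T : List (NetNode ι)) (s : Finset ι) : T <+: netStep k η T s := by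
    rw [netStep]
    split_ifs
    · exact List.prefix_append _ _
    · exact List.prefix_rfl
  rw [onlineRows, onlineRows, List.map_append, List.map_singleton, netRun_concat]
  exact (List.prefix_append_right_inj _).2 ((netStep_prefix _ _).map _)

theorem representable_onlineRows_concat (hη : 0 ≤ η) (hpack : PackingBound 𝒜 k M)
    (hM : η * ∑ i ∈ range k, M i * netScale (Fintype.card ι) i ≤ Fintype.card ι) (hσ : σ ≠ 0)
    {l : List (ι → ℝ)} {q : ι → ℝ} (hl : ∀ r ∈ l ++ [q], rowSupport r ∈ 𝒜)
    (hq : ∀ j, q j = 0 ∨ q j = 1) :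
    Representable (onlineRows k η σ (l ++ [q])) q
      (k / σ ^ 2 + 4 * netScale (Fintype.card ι) k) := by
  simp only [List.forall_mem_append, List.forall_mem_singleton] at hl
  have invariant : NetInvariant 𝒜 k η M (netRun k η (l.map rowSupport)) :=
    netInvariant_netRun hη hpack hM (by simpa using hl.1)
  obtain ⟨p, hp, near⟩ := invariant.exists_weightedDist_netStep_le hη hM (rowSupport q)
  have invariant_step := invariant.step hη hpack hM hl.2
  rw [onlineRows, List.map_append, List.map_singleton, netRun_concat]
  refine (representable_factorRows hσ (invariant_step.representable p hp) q).mono ?_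
  rw [← sum_sq_indicator_sub_indicator, indicator_rowSupport hq] at near
  gcongr
  exact invariant_step.level_le p hp

theorem sum_onlineRows_sq_le_one (hη₀ : 0 < η) (hη₁ : η ≤ 1) (hpack : PackingBound 𝒜 k M)
    (hM : η * ∑ i ∈ range k, M i * netScale (Fintype.card ι) i ≤ Fintype.card ι)
    (hσ : 4 * σ ^ 2 * Real.log (2 * Fintype.card ι) ≤ η) {l : List (ι → ℝ)}
    (hl : ∀ r ∈ l, rowSupport r ∈ 𝒜) (j : ι) :
    ∑ i ∈ range (onlineRows k η σ l).length, (onlineRows k η σ l).getD i 0 j ^ 2 ≤ 1 := by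
  have invariant : NetInvariant 𝒜 k η M (netRun k η (l.map rowSupport)) :=
    netInvariant_netRun hη₀.le hpack hM (by simpa using hl)
  refine sum_factorRows_sq_le_one hη₀ hη₁ hσ <|
    le_trans ?_ (invariant.sum_weight_le_two_mul hη₀.le hM)
  exact single_le_sum (fun j _ => zero_le_one.trans (one_le_netWeight hη₀.le _ j)) (mem_univ j)

end Online

section Parameters

variable {d P : ℝ} {m N : ℕ}

theorem one_le_logb_four_mul (hN : 1 ≤ N) : 1 ≤ Real.logb 2 (4 * N) := by
  have hN' : (1 : ℝ) ≤ N := mod_cast hN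
  rw [Real.le_logb_iff_rpow_le one_lt_two (by positivity), Real.rpow_one]
  linarith

theorem log_two_mul_le_logb_four_mul (hN : 1 ≤ N) :
    Real.log (2 * N) ≤ Real.logb 2 (4 * N) := by
  have hN' : (1 : ℝ) ≤ N := mod_cast hN
  calc Real.log (2 * N) ≤ Real.log (4 * N) := by
        gcongr
        norm_num
    _ ≤ Real.logb 2 (4 * N) :=
        le_div_self (Real.log_nonneg (by linarith)) (Real.log_pos one_lt_two)
          (Real.log_two_lt_d9.le.trans (by norm_num))

theorem natCast_le_logb_four_mul {k : ℕ} (hN : 1 ≤ N) (hk : (2 : ℝ) ^ k ≤ 4 * N) :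
    k ≤ Real.logb 2 (4 * N) := by
  have : (0 : ℝ) < N := mod_cast hN
  rwa [Real.le_logb_iff_rpow_le one_lt_two (by positivity), Real.rpow_natCast]

theorem two_rpow_pow_mul_netScale (d : ℝ) (N i : ℕ) :
    ((2 : ℝ) ^ d) ^ (i + 1) * netScale N i = 4 * N * ((2 : ℝ) ^ (d - 1)) ^ (i + 1) := by
  have : (2 : ℝ) ^ d = 2 * 2 ^ (d - 1) := by
    rw [Real.rpow_sub_one two_ne_zero, mul_div_cancel₀ _ two_ne_zero]
  rw [this, netScale, mul_pow]
  field_simp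
  ring

theorem rpow_half_sq {x : ℝ} (hx : 0 ≤ x) (a : ℝ) : (x ^ (a / 2)) ^ 2 = x ^ a := by
  rw [← Real.rpow_natCast, ← Real.rpow_mul hx, Nat.cast_ofNat, div_mul_cancel₀ _ two_ne_zero]

theorem exists_depth_mul_pow_le (hd : 1 < d) (hN : 1 ≤ N) : ∃ k : ℕ,
    k * Real.logb 2 (4 * N) * ((2 : ℝ) ^ (d - 1)) ^ k ≤
      ((N : ℝ) ^ ((1 - 1 / d) / 2) * Real.logb 2 (4 * N) ^ (1 / d)) ^ 2 ∧
    netScale N k ≤ 4 * ((N : ℝ) ^ ((1 - 1 / d) / 2) * Real.logb 2 (4 * N) ^ (1 / d)) ^ 2 := by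
  set L := Real.logb 2 (4 * N)
  have hL : 1 ≤ L := one_le_logb_four_mul hN
  have hN' : (1 : ℝ) ≤ N := mod_cast hN
  have hd₀ : 0 < d := zero_lt_one.trans hd
  set y : ℝ := (N / L ^ 2) ^ (1 / d)
  have hy : 0 < y := by positivity
  have target_eq : ((N : ℝ) ^ ((1 - 1 / d) / 2) * L ^ (1 / d)) ^ 2 = N / y := by
    rw [mul_pow, rpow_half_sq (by positivity), Real.rpow_sub (by positivity), Real.rpow_one,
      Real.rpow_pow_comm (by positivity), div_mul, ← Real.div_rpow (by positivity) (by positivity)]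
  have y_rpow : y ^ (d - 1) = N / L ^ 2 / y := by
    rw [Real.rpow_sub_one hy.ne', ← Real.rpow_mul (by positivity), one_div_mul_cancel hd₀.ne',
      Real.rpow_one]
  rw [target_eq]
  -- For `2 ^ k ≈ y` both bounds are of order `N / y`.
  refine ⟨⌊Real.logb 2 y⌋₊, ?_, ?_⟩
  · set k := ⌊Real.logb 2 y⌋₊
    rcases eq_or_ne k 0 with hk | hk
    · simp only [hk, Nat.cast_zero, zero_mul]
      positivity
    have two_pow_le : (2 : ℝ) ^ k ≤ y := by
      rw [← Real.rpow_natCast, ← Real.le_logb_iff_rpow_le one_lt_two hy]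
      exact (Nat.le_floor_iff' hk).1 le_rfl
    have y_le : y ≤ 4 * N := by
      have : (N : ℝ) / L ^ 2 ≤ N := div_le_self (by positivity) (one_le_pow₀ hL)
      calc y ≤ (N : ℝ) ^ (1 / d) := Real.rpow_le_rpow (by positivity) this (by positivity)
        _ ≤ N := Real.rpow_le_self_of_one_le hN' (by rw [div_le_one hd₀]; exact hd.le)
        _ ≤ 4 * N := by linarith
    have hkL : k ≤ L := natCast_le_logb_four_mul hN (two_pow_le.trans y_le)
    calc k * L * ((2 : ℝ) ^ (d - 1)) ^ k ≤ L * L * y ^ (d - 1) := by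
          rw [Real.rpow_pow_comm zero_le_two]
          gcongr
      _ = N / y := by
          rw [y_rpow]
          field_simp
  · have lt_two_pow : y < 2 ^ (⌊Real.logb 2 y⌋₊ + 1) := by
      rw [← Real.rpow_natCast, ← Real.logb_lt_iff_lt_rpow one_lt_two hy]
      exact_mod_cast Nat.lt_floor_add_one _
    rw [netScale, ← mul_div_assoc, div_le_div_iff₀ (by positivity) hy]
    rw [pow_succ] at lt_two_pow
    nlinarith

theorem exists_net_parameters_of_card (hd : 1 < d) (hP : 1 ≤ P) (hN : 1 ≤ N) :
    ∃ (k : ℕ) (η : ℝ), 0 < η ∧ η ≤ 1 ∧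
      η * ∑ i ∈ range k, P * ((2 : ℝ) ^ d) ^ (i + 1) * netScale N i ≤ N ∧
      4 * k * Real.logb 2 (4 * N) / η + 4 * netScale N k ≤
        32 * (P * 2 ^ (d - 1) / (2 ^ (d - 1) - 1)) *
          ((N : ℝ) ^ ((1 - 1 / d) / 2) * Real.logb 2 (4 * N) ^ (1 / d)) ^ 2 := by
  obtain ⟨k, hk, hscale⟩ := exists_depth_mul_pow_le hd hN
  set x := ((N : ℝ) ^ ((1 - 1 / d) / 2) * Real.logb 2 (4 * N) ^ (1 / d)) ^ 2
  set r : ℝ := 2 ^ (d - 1)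
  have hr : 1 < r := Real.one_lt_rpow one_lt_two (sub_pos.2 hd)
  have hr₁ : 0 < r - 1 := sub_pos.2 hr
  set B := P * r / (r - 1)
  have hB : 1 ≤ B := by
    rw [one_le_div hr₁]
    nlinarith
  have hrk : 1 ≤ r ^ k := one_le_pow₀ hr.le
  have geom_sum_le : ∑ i ∈ range k, r ^ (i + 1) ≤ r / (r - 1) * r ^ k := by
    simp_rw [pow_succ', ← mul_sum, geom_sum_eq hr.ne']
    rw [div_mul_eq_mul_div, mul_div_assoc]
    gcongr
    linarith
  refine ⟨k, 1 / (4 * B * r ^ k), by positivity, ?_, ?_, ?_⟩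
  · rw [div_le_one (by positivity)]
    nlinarith
  · calc 1 / (4 * B * r ^ k) * ∑ i ∈ range k, P * ((2 : ℝ) ^ d) ^ (i + 1) * netScale N i
        = 1 / (4 * B * r ^ k) * (P * (4 * N * ∑ i ∈ range k, r ^ (i + 1))) := by
          simp_rw [mul_assoc P, two_rpow_pow_mul_netScale, ← mul_sum, r]
      _ ≤ 1 / (4 * B * r ^ k) * (P * (4 * N * (r / (r - 1) * r ^ k))) := by gcongr
      _ = N := by
          simp only [B]
          field_simp
  · calc 4 * k * Real.logb 2 (4 * N) / (1 / (4 * B * r ^ k)) + 4 * netScale N k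
        = 16 * B * (k * Real.logb 2 (4 * N) * r ^ k) + 4 * netScale N k := by
          rw [div_div_eq_mul_div, div_one]
          ring
      _ ≤ 16 * B * x + 4 * (4 * x) := by gcongr
      _ ≤ 32 * B * x := by nlinarith [show 0 ≤ x from sq_nonneg _]

theorem min_mul_netScale_le (hd : 1 < d) (hP : 1 ≤ P) (m N i : ℕ) :
    min (P * ((2 : ℝ) ^ d) ^ (i + 1)) m * netScale N i ≤
      4 * N * P * (m : ℝ) ^ (1 - 1 / d) := by
  have hd₀ : 0 < d := zero_lt_one.trans hd
  have hd₁ : 1 / d ≤ 1 := (div_le_one hd₀).2 hd.le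
  have hd₂ : 0 ≤ 1 - 1 / d := sub_nonneg.2 hd₁
  set a := P * ((2 : ℝ) ^ d) ^ (i + 1)
  have a_rpow_le : a ^ (1 / d) ≤ P * 2 ^ (i + 1) := by
    rw [Real.mul_rpow (by positivity) (by positivity), Real.rpow_pow_comm zero_le_two,
      one_div, Real.rpow_rpow_inv (by positivity) hd₀.ne', ← one_div]
    gcongr
    exact Real.rpow_le_self_of_one_le hP hd₁
  have min_le : min a m ≤ a ^ (1 / d) * (m : ℝ) ^ (1 - 1 / d) := by
    have hmin : 0 ≤ min a m := by positivity
    calc min a m = min a m ^ (1 / d) * min a m ^ (1 - 1 / d) := by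
          rw [← Real.rpow_add_of_nonneg hmin (by positivity) hd₂, add_sub_cancel,
            Real.rpow_one]
      _ ≤ a ^ (1 / d) * (m : ℝ) ^ (1 - 1 / d) := by
          gcongr
          · exact min_le_left _ _
          · exact min_le_right _ _
  calc min a m * netScale N i ≤ P * 2 ^ (i + 1) * (m : ℝ) ^ (1 - 1 / d) * netScale N i := by
        refine mul_le_mul_of_nonneg_right (min_le.trans ?_) (netScale_nonneg N i)
        gcongr
    _ = 4 * N * P * (m : ℝ) ^ (1 - 1 / d) := by
        rw [netScale]
        field_simp
        ring

theorem exists_net_parameters_of_length (hd : 1 < d) (hP : 1 ≤ P) (hm : 1 ≤ m) (hN : 1 ≤ N) :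
    ∃ (k : ℕ) (η : ℝ), 0 < η ∧ η ≤ 1 ∧
      η * ∑ i ∈ range k, min (P * ((2 : ℝ) ^ d) ^ (i + 1)) m * netScale N i ≤ N ∧
      4 * k * Real.logb 2 (4 * N) / η + 4 * netScale N k ≤
        24 * P * ((m : ℝ) ^ ((1 - 1 / d) / 2) * Real.logb 2 (4 * N) ^ 3) ^ 2 := by
  set L := Real.logb 2 (4 * N)
  have hL : 1 ≤ L := one_le_logb_four_mul hN
  set Y : ℝ := (m : ℝ) ^ (1 - 1 / d)
  have hY : 1 ≤ Y := Real.one_le_rpow (mod_cast hm)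
    (sub_nonneg.2 ((div_le_one (zero_lt_one.trans hd)).2 hd.le))
  set k := Nat.log 2 N + 1
  have lt_two_pow : (N : ℝ) < 2 ^ k := mod_cast Nat.lt_pow_succ_log_self one_lt_two N
  have hkL : k ≤ L := by
    refine natCast_le_logb_four_mul hN ?_
    have : (2 : ℝ) ^ Nat.log 2 N ≤ N := mod_cast Nat.pow_log_le_self 2 (Nat.ne_of_gt hN)
    rw [pow_succ]
    linarith [N.cast_nonneg (α := ℝ)]
  have scale_le : netScale N k ≤ 2 := by
    rw [netScale, div_le_iff₀ (by positivity)]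
    linarith
  refine ⟨k, 1 / (4 * P * L * Y), by positivity, ?_, ?_, ?_⟩
  · have := one_le_mul_of_one_le_of_one_le (one_le_mul_of_one_le_of_one_le hP hL) hY
    rw [div_le_one (by positivity)]
    linarith
  · calc 1 / (4 * P * L * Y) * ∑ i ∈ range k, min (P * ((2 : ℝ) ^ d) ^ (i + 1)) m * netScale N i
        ≤ 1 / (4 * P * L * Y) * ∑ _i ∈ range k, 4 * N * P * Y := by
          refine mul_le_mul_of_nonneg_left (sum_le_sum fun i _ => ?_) (by positivity)
          exact min_mul_netScale_le hd hP m N i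
      _ ≤ 1 / (4 * P * L * Y) * (L * (4 * N * P * Y)) := by
          rw [sum_const, card_range, nsmul_eq_mul]
          gcongr
      _ = N := by field_simp
  · have hPYL : 1 ≤ P * Y * L ^ 6 :=
      one_le_mul_of_one_le_of_one_le (one_le_mul_of_one_le_of_one_le hP hY) (one_le_pow₀ hL)
    calc 4 * k * L / (1 / (4 * P * L * Y)) + 4 * netScale N k
        = 16 * (P * Y * (k * L ^ 2)) + 4 * netScale N k := by
          rw [div_div_eq_mul_div, div_one]
          ring
      _ ≤ 16 * (P * Y * (L ^ 4 * L ^ 2)) + 4 * 2 := by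
          gcongr
          exact hkL.trans (le_self_pow₀ hL (by norm_num))
      _ ≤ 24 * P * (Y * L ^ 6) := by linarith
      _ = 24 * P * ((m : ℝ) ^ ((1 - 1 / d) / 2) * L ^ 3) ^ 2 := by
          rw [mul_pow, rpow_half_sq m.cast_nonneg]
          ring

theorem exists_net_parameters (hd : 1 < d) (hP : 1 ≤ P) :
    ∃ C : ℝ, 0 < C ∧ ∀ m N : ℕ, 1 ≤ m → 1 ≤ N → ∃ (k : ℕ) (η : ℝ), 0 < η ∧ η ≤ 1 ∧
      η * ∑ i ∈ range k, min (P * ((2 : ℝ) ^ d) ^ (i + 1)) m * netScale N i ≤ N ∧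
      4 * k * Real.logb 2 (4 * N) / η + 4 * netScale N k ≤
        (C * min ((m : ℝ) ^ ((1 - 1 / d) / 2) * Real.logb 2 (4 * N) ^ 3)
          ((N : ℝ) ^ ((1 - 1 / d) / 2) * Real.logb 2 (4 * N) ^ (1 / d))) ^ 2 := by
  set B := P * 2 ^ (d - 1) / (2 ^ (d - 1) - 1)
  have hr : (1 : ℝ) < 2 ^ (d - 1) := Real.one_lt_rpow one_lt_two (sub_pos.2 hd)
  have hPB : P ≤ B := by
    rw [le_div_iff₀ (sub_pos.2 hr)]
    nlinarith
  have : 0 < B := (zero_lt_one.trans_le hP).trans_le hPB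
  refine ⟨√(32 * B), by positivity, fun m N hm hN => ?_⟩
  rw [mul_pow, Real.sq_sqrt (by positivity)]
  rcases min_choice ((m : ℝ) ^ ((1 - 1 / d) / 2) * Real.logb 2 (4 * N) ^ 3)
    ((N : ℝ) ^ ((1 - 1 / d) / 2) * Real.logb 2 (4 * N) ^ (1 / d)) with h | h <;> rw [h]
  · obtain ⟨k, η, hη₀, hη₁, budget, cost⟩ := exists_net_parameters_of_length hd hP hm hN
    refine ⟨k, η, hη₀, hη₁, budget, cost.trans ?_⟩
    gcongr
    norm_num
  · obtain ⟨k, η, hη₀, hη₁, budget, cost⟩ := exists_net_parameters_of_card hd hP hN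
    refine ⟨k, η, hη₀, hη₁, le_trans ?_ budget, cost⟩
    gcongr with i
    · exact netScale_nonneg N i
    · exact min_le_left _ _

end Parameters

section OnlineFactorization

variable {ι : Type*}

theorem exists_forall_representable_coeff (R : List (ι → ℝ) → List (ι → ℝ)) (b : ℝ) :
    ∃ ℓ : List (ι → ℝ) → ℕ → ℝ, ∀ l q, Representable (R (l ++ [q])) q b →
      (∀ j, ∑ i ∈ range (R (l ++ [q])).length,
        ℓ (l ++ [q]) i * (R (l ++ [q])).getD i 0 j = q j) ∧
      ∑ i ∈ range (R (l ++ [q])).length, ℓ (l ++ [q]) i ^ 2 ≤ b := by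
  have (l : List (ι → ℝ)) : ∃ c : ℕ → ℝ, ∀ q ∈ l.getLast?, Representable (R l) q b →
      (∀ j, ∑ i ∈ range (R l).length, c i * (R l).getD i 0 j = q j) ∧
      ∑ i ∈ range (R l).length, c i ^ 2 ≤ b := by
    by_cases h : ∃ q ∈ l.getLast?, Representable (R l) q b
    · obtain ⟨q, hq, c, hc⟩ := h
      refine ⟨c, fun q' hq' _ => ?_⟩
      rwa [Option.mem_unique hq' hq]
    · exact ⟨0, fun q hq hrep => (h ⟨q, hq, hrep⟩).elim⟩
  choose ℓ hℓ using this
  exact ⟨ℓ, fun l q => hℓ (l ++ [q]) q (by simp)⟩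

theorem exists_online_factorization [Fintype ι] [DecidableEq ι] {k : ℕ} {η L : ℝ} {M : ℕ → ℝ}
    (hη₀ : 0 < η) (hη₁ : η ≤ 1)
    (hM : η * ∑ i ∈ range k, M i * netScale (Fintype.card ι) i ≤ Fintype.card ι)
    (hL₀ : 0 < L) (hL : Real.log (2 * Fintype.card ι) ≤ L) :
    ∃ (R : List (ι → ℝ) → List (ι → ℝ)) (ℓ : List (ι → ℝ) → ℕ → ℝ),
      (∀ l q, R l <+: R (l ++ [q])) ∧
      ∀ 𝒜 : Finset (Finset ι), PackingBound 𝒜 k M → ∀ l q,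
        (∀ r ∈ l ++ [q], rowSupport r ∈ 𝒜) → (∀ j, q j = 0 ∨ q j = 1) →
        (∀ j, ∑ i ∈ range (R (l ++ [q])).length,
          ℓ (l ++ [q]) i * (R (l ++ [q])).getD i 0 j = q j) ∧
        (∀ j, ∑ i ∈ range (R (l ++ [q])).length, (R (l ++ [q])).getD i 0 j ^ 2 ≤ 1) ∧
        ∑ i ∈ range (R (l ++ [q])).length, ℓ (l ++ [q]) i ^ 2 ≤
          4 * k * L / η + 4 * netScale (Fintype.card ι) k := by
  set σ := √(η / (4 * L))
  have hσ : 0 < σ := by positivity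
  have σ_sq : σ ^ 2 = η / (4 * L) := Real.sq_sqrt (by positivity)
  have σ_sq_mul_log_le : 4 * σ ^ 2 * Real.log (2 * Fintype.card ι) ≤ η := by
    calc 4 * σ ^ 2 * Real.log (2 * Fintype.card ι) ≤ 4 * σ ^ 2 * L := by gcongr
      _ = η := by
        rw [σ_sq]
        field_simp
  obtain ⟨ℓ, hℓ⟩ := exists_forall_representable_coeff (onlineRows (ι := ι) k η σ)
    (4 * k * L / η + 4 * netScale (Fintype.card ι) k)
  refine ⟨onlineRows k η σ, ℓ, onlineRows_prefix_concat k η σ,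
    fun 𝒜 hpack l q hl hq => ?_⟩
  have representable := representable_onlineRows_concat hη₀.le hpack hM hσ.ne' hl hq
  rw [σ_sq, div_div_eq_mul_div, ← mul_assoc, mul_comm (k : ℝ)] at representable
  obtain ⟨hsum, hnorm⟩ := hℓ l q representable
  exact ⟨hsum, sum_onlineRows_sq_le_one hη₀ hη₁ hpack hM σ_sq_mul_log_le hl, hnorm⟩

theorem exists_packingBound_image_rowSupport {d K : ℝ} (hd : 0 ≤ d) (hK : 1 ≤ K) :
    ∃ P : ℝ, 1 ≤ P ∧ ∀ (m N k : ℕ) (Q : Matrix (Fin m) (Fin N) ℝ), 1 ≤ N →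
      (∀ s : ℕ, 1 ≤ s → s ≤ N → (shatterFn Q s : ℝ) ≤ K * (s : ℝ) ^ d) →
      PackingBound (univ.image fun i => rowSupport (Q i)) k
        fun i => min (P * ((2 : ℝ) ^ d) ^ (i + 1)) m := by
  obtain ⟨D, hD₁, hD⟩ := exists_forall_le_of_two_pow_le_mul_rpow K d
  refine ⟨2 * K * (5 * D) ^ d, ?_, fun m N k Q hN hQ => ?_⟩
  · have : 1 ≤ (5 * D) ^ d := Real.one_le_rpow (by linarith) hd
    nlinarith
  · have : NeZero N := ⟨Nat.ne_of_gt hN⟩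
    have card_le : #(univ.image fun i => rowSupport (Q i)) ≤ m := by
      simpa using card_image_le (s := univ) (f := fun i => rowSupport (Q i))
    exact (polynomialGrowth_image_rowSupport hQ).packingBound (zero_le_one.trans hK) hd hD₁ hD
      (mod_cast card_le) k

end OnlineFactorization

end

theorem stmt19_general (d K : ℝ) (hd : 1 < d) (hK : 1 ≤ K) :
    ∃ C : ℝ, 0 < C ∧ ∀ m N : ℕ, 1 ≤ N →
    ∃ (k : List (Fin N → ℝ) → ℕ) (row : List (Fin N → ℝ) → ℕ → (Fin N → ℝ))
      (ℓ : List (Fin N → ℝ) → ℕ → ℝ),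
      (∀ l q, k l ≤ k (l ++ [q]) ∧ ∀ i < k l, row (l ++ [q]) i = row l i) ∧
      (∀ Q : Matrix (Fin m) (Fin N) ℝ,
        (∀ i j, Q i j = 0 ∨ Q i j = 1) →
        (∀ s : ℕ, 1 ≤ s → s ≤ N → (shatterFn Q s : ℝ) ≤ K * (s : ℝ) ^ d) →
        ∀ (t : ℕ) (ht : t ≤ m), 1 ≤ t →
        ∀ pl : List (Fin N → ℝ), pl = List.ofFn (fun i : Fin t => Q (Fin.castLE ht i)) →
          ∀ hlt : t - 1 < m,
          (∀ j, ∑ i ∈ Finset.range (k pl), ℓ pl i * row pl i j = Q ⟨t - 1, hlt⟩ j) ∧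
          (∀ j, Real.sqrt (∑ i ∈ Finset.range (k pl), (row pl i j) ^ 2) ≤ 1) ∧
          Real.sqrt (∑ i ∈ Finset.range (k pl), (ℓ pl i) ^ 2) ≤
            C * min ((m : ℝ) ^ (((1 : ℝ) - 1 / d) / 2) * (Real.logb 2 (4 * N)) ^ 3)
                    ((N : ℝ) ^ (((1 : ℝ) - 1 / d) / 2) *
                      (Real.logb 2 (4 * N)) ^ ((1 : ℝ) / d))) := by
  obtain ⟨P, hP, packing⟩ := exists_packingBound_image_rowSupport (zero_le_one.trans hd.le) hK
  obtain ⟨C, hC, parameters⟩ := exists_net_parameters hd hP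
  refine ⟨C, hC, fun m N hN => ?_⟩
  rcases m.eq_zero_or_pos with rfl | hm
  · exact ⟨0, 0, 0, by simp, fun Q _ _ t ht ht₁ => by omega⟩
  obtain ⟨k, η, hη₀, hη₁, budget, cost⟩ := parameters m N hm hN
  have logb_pos : 0 < Real.logb 2 (4 * N) := zero_lt_one.trans_le (one_le_logb_four_mul hN)
  obtain ⟨R, ℓ, hR, factorization⟩ := exists_online_factorization (ι := Fin N) hη₀ hη₁
    (by simpa using budget) logb_pos (by simpa using log_two_mul_le_logb_four_mul hN)
  refine ⟨fun l => (R l).length, fun l i => (R l).getD i 0, ℓ,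
    fun l q => ⟨(hR l q).length_le, fun i hi => ?_⟩, fun Q hQ₀₁ hQ t ht ht₁ pl hpl hlt => ?_⟩
  · obtain ⟨R', hR'⟩ := hR l q
    simp only [← hR', List.getD_append _ _ _ _ hi]
  obtain ⟨t, rfl⟩ := Nat.exists_eq_add_of_le' ht₁
  have rowSupport_mem : ∀ r ∈ pl, rowSupport r ∈ Finset.univ.image fun i => rowSupport (Q i) := by
    simp [hpl]
  rw [List.ofFn_succ', List.concat_eq_append] at hpl
  subst hpl
  obtain ⟨factors, column_le, row_le⟩ :=
    factorization _ (packing m N k Q hN hQ) _ _ rowSupport_mem (hQ₀₁ _)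
  rw [Fintype.card_fin] at row_le
  exact ⟨factors, fun j => Real.sqrt_le_one.2 (column_le j),
    (Real.sqrt_le_sqrt (row_le.trans cost)).trans_eq (Real.sqrt_sq (by positivity))⟩

/-- An online factorization algorithm in the row arrival model is encoded by functions
of the sequence of rows received so far: `k l` is the number of rows of the current
matrix `R`, `row l i` is its `i`-th row, and `ℓ l` is the current row vector (one
coordinate per row of `R`). -/
theorem stmt19 (d K : ℝ) (hd : 2 ≤ d) (hK : 1 ≤ K) :
    ∃ C : ℝ, 0 < C ∧ ∀ m N : ℕ, 2 ≤ N →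
    ∃ (k : List (Fin N → ℝ) → ℕ) (row : List (Fin N → ℝ) → ℕ → (Fin N → ℝ))
      (ℓ : List (Fin N → ℝ) → ℕ → ℝ),
      -- online structure: `R_t` extends `R_{t-1}` by appending rows
      (∀ l q, k l ≤ k (l ++ [q]) ∧ ∀ i < k l, row (l ++ [q]) i = row l i) ∧
      -- the guarantee, for 0/1 matrices with bounded shatter function
      (∀ Q : Matrix (Fin m) (Fin N) ℝ,
        (∀ i j, Q i j = 0 ∨ Q i j = 1) →
        (∀ s : ℕ, 1 ≤ s → s ≤ N → (shatterFn Q s : ℝ) ≤ K * (s : ℝ) ^ d) →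
        ∀ (t : ℕ) (ht : t ≤ m), 1 ≤ t →
        ∀ pl : List (Fin N → ℝ), pl = List.ofFn (fun i : Fin t => Q (Fin.castLE ht i)) →
          ∀ hlt : t - 1 < m,
          -- `ℓ_t R_t = q_t`
          (∀ j, ∑ i ∈ Finset.range (k pl), ℓ pl i * row pl i j = Q ⟨t - 1, hlt⟩ j) ∧
          -- `‖R_t‖_{1→2} ≤ 1`
          (∀ j, Real.sqrt (∑ i ∈ Finset.range (k pl), (row pl i j) ^ 2) ≤ 1) ∧
          -- `‖ℓ_t‖₂ ≤ C·min(m^{(1−1/d)/2}(log₂ 4N)³, N^{(1−1/d)/2}(log₂ 4N)^{1/d})`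
          Real.sqrt (∑ i ∈ Finset.range (k pl), (ℓ pl i) ^ 2) ≤
            C * min ((m : ℝ) ^ (((1 : ℝ) - 1 / d) / 2) * (Real.logb 2 (4 * N)) ^ 3)
                    ((N : ℝ) ^ (((1 : ℝ) - 1 / d) / 2) *
                      (Real.logb 2 (4 * N)) ^ ((1 : ℝ) / d))) := by
  obtain ⟨C, hC, h⟩ := stmt19_general d K (one_lt_two.trans_le hd) hK
  exact ⟨C, hC, fun m N hN => h m N (one_le_two.trans hN)⟩
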